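/- Let I and J be finite index types and c : I → J a function. Let A_ww be an invertible I×I matrix over a field with A_ww i i' = 0 whenever c i ≠ c i', let A_wp be an I×J matrix with A_wp i j = 0 whenever c i ≠ j, and let A_pw be a J×I matrix with A_pw j i = 0 whenever c i ≠ j. Then A_pw·A_ww⁻¹·A_wp is a diagonal matrix; consequently, the statically condensed pressure block Ā_pp = A_pp − A_pw·A_ww⁻¹·A_wp has the same off-diagonal sparsity pattern as A_pப (the sparsity pattern of A_pp remains unchanged). -/

import Mathlib

open Matrix

theorem inv_block_aux {K : Type*} [Field K] {I J : Type*} [Fintype I] [DecidableEq I]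
    (c : I → J) (A : Matrix I I K) (hA : IsUnit A)
    (hblock : ∀ i i', c i ≠ c i' → A i i' = 0) (i i' : I) (h : c i ≠ c i') :
    A⁻¹ i i' = 0 := by
  classical
  have hdet : IsUnit A.det := (Matrix.isUnit_iff_isUnit_det A).1 hA
  let D : Matrix I I K := Matrix.diagonal (fun k => if c k = c i' then 1 else 0)
  have hcomm : A * D = D * A := by
    ext a b
    simp only [D, Matrix.mul_diagonal, Matrix.diagonal_mul]
    by_cases hab : c a = c b
    · simp [hab]
    · simp [hblock a b hab]
  have h2 : D * A⁻¹ = A⁻¹ * D := by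
    calc D * A⁻¹ = A⁻¹ * (A * D) * A⁻¹ := by
          rw [← Matrix.mul_assoc, Matrix.nonsing_inv_mul A hdet, Matrix.one_mul]
      _ = A⁻¹ * D := by
          rw [hcomm, Matrix.mul_assoc, Matrix.mul_assoc, Matrix.mul_nonsing_inv A hdet,
            Matrix.mul_one]
  have h3 := congrFun (congrFun h2 i) i'
  simp only [D, Matrix.mul_diagonal, Matrix.diagonal_mul] at h3
  simpa [h] using h3.symm

/-- **Static condensation keeps the pressure sparsity pattern.**
If `A_ww` is invertible and block diagonal with respect to the cell map
`c : I → J`, and `A_wp`, `A_pw` have a nonzero at (one-sided face `i`,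
cell `j`) only if `c i = j`, then `A_pw·A_ww⁻¹·A_wp` is a diagonal matrix;
consequently the statically condensed pressure block
`Ā_pp = A_pp − A_pw·A_ww⁻¹·A_wp` has the same off-diagonal entries as `A_pp`
(the sparsity pattern of `A_pp` remains unchanged). -/
theorem condensed_pressure_block_sparsity
    {K : Type*} [Field K] {I J : Type*} [Fintype I] [Fintype J] [DecidableEq I]
    (c : I → J)
    (A_ww : Matrix I I K) (hww : IsUnit A_ww)
    (hblock : ∀ i i', c i ≠ c i' → A_ww i i' = 0)
    (A_wp : Matrix I J K) (hwp : ∀ i j, c i ≠ j → A_wp i j = 0)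
    (A_pw : Matrix J I K) (hpw : ∀ j i, c i ≠ j → A_pw j i = 0)
    (A_pp : Matrix J J K) :
    (A_pw * A_ww⁻¹ * A_wp).IsDiag ∧
      ∀ j j', j ≠ j' → (A_pp - A_pw * A_ww⁻¹ * A_wp) j j' = A_pp j j' := by
  have hd : (A_pw * A_ww⁻¹ * A_wp).IsDiag := by
    intro j j' hj
    rw [Matrix.mul_apply]
    refine Finset.sum_eq_zero fun b _ => ?_
    by_cases hb : c b = j'
    · rw [Matrix.mul_apply, Finset.sum_eq_zero, zero_mul]
      intro a _
      by_cases ha : c a = j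
      · rw [inv_block_aux c A_ww hww hblock a b (by rw [ha, hb]; exact hj), mul_zero]
      · rw [hpw j a ha, zero_mul]
    · rw [hwp b j' hb, mul_zero]
  refine ⟨hd, fun j j' hj => ?_⟩
  rw [Matrix.sub_apply, hd hj, sub_zero]
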